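/- arXiv:1005.3494 — 3 statements merged into one kernel-verified Lean document; each statement's English description precedes it below -/
import Mathlib

section
/- For real $u \ge 1$ and complex $s$ with $\mathrm{Re}(s) > 0$, define $G(u,s) = \int_0^{1/u} \frac{1-e^{-ts}}{t}\,dt$. Then there is an absolute constant $A>0$ such that $|G(u,s)| \le A\,\log(1 + |s|/u)$ for all such $u$ and $s$; moreover $|G(u,s)| \le \int_0^{1/u} \min(|s|, 1/t)\,dt$ up to an absolute constant. -/
open MeasureTheory

/-- `G(u,s) = ∫_0^{1/u} (1 - e^{-ts})/t dt`. -/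
noncomputable def G (u : ℝ) (s : ℂ) : ℂ :=
  ∫ t in (0:ℝ)..(1 / u), (1 - Complex.exp (-(t : ℂ) * s)) / (t : ℂ)

theorem G_aux_pt (s : ℂ) (hs : 0 < s.re) (t : ℝ) (ht : 0 < t) :
    ‖(1 - Complex.exp (-(t : ℂ) * s)) / (t : ℂ)‖ ≤ 2 * min ‖s‖ t⁻¹ := by
  have hn : ‖-(t : ℂ) * s‖ = t * ‖s‖ := by
    rw [norm_mul, norm_neg, Complex.norm_real, Real.norm_of_nonneg ht.le]
  have h2 : ‖1 - Complex.exp (-(t : ℂ) * s)‖ ≤ 2 := by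
    refine (norm_sub_le _ _).trans ?_
    have : ‖Complex.exp (-(t : ℂ) * s)‖ ≤ 1 := by
      rw [Complex.norm_exp, Real.exp_le_one_iff]
      simp
      positivity
    rw [norm_one]; linarith
  have h1 : ‖1 - Complex.exp (-(t : ℂ) * s)‖ ≤ 2 * (t * ‖s‖) := by
    by_cases h : t * ‖s‖ ≤ 1
    · rw [norm_sub_rev, ← hn]
      exact Complex.norm_exp_sub_one_le (by rw [hn]; exact h)
    · push Not at h
      linarith
  rw [norm_div, Complex.norm_real, Real.norm_of_nonneg ht.le, div_le_iff₀ ht]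
  rcases min_choice ‖s‖ t⁻¹ with h | h <;> rw [h]
  · linarith
  · rw [mul_assoc, inv_mul_cancel₀ ht.ne']; linarith

theorem G_aux_min (a t : ℝ) (ha : 0 < a) (ht : 0 < t) :
    min a t⁻¹ ≤ 2 * (a / (1 + a * t)) := by
  have hp : 0 < a * t := by positivity
  rw [← mul_div_assoc, le_div_iff₀ (by positivity)]
  by_cases h : a * t ≤ 1
  · calc min a t⁻¹ * (1 + a * t) ≤ a * (1 + a * t) := by gcongr; exact min_le_left _ _
      _ ≤ 2 * a := by nlinarith
  · push Not at h
    calc min a t⁻¹ * (1 + a * t) ≤ t⁻¹ * (1 + a * t) := by gcongr; exact min_le_right _ _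
      _ ≤ t⁻¹ * (a * t + a * t) := by gcongr
      _ = 2 * a := by field_simp; ring

theorem G_aux_int (a b : ℝ) (ha : 0 < a) (hb : 0 < b) :
    IntervalIntegrable (fun t : ℝ => a / (1 + a * t)) volume 0 b ∧
    ∫ t in (0:ℝ)..b, a / (1 + a * t) = Real.log (1 + a * b) := by
  have hpos : ∀ t ∈ Set.uIcc 0 b, 0 < 1 + a * t := by
    intro t ht
    rw [Set.uIcc_of_le hb.le] at ht
    have := mul_nonneg ha.le ht.1
    linarith
  have hi : IntervalIntegrable (fun t : ℝ => a / (1 + a * t)) volume 0 b := by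
    apply ContinuousOn.intervalIntegrable
    exact ContinuousOn.div (by fun_prop) (by fun_prop) (fun t ht => (hpos t ht).ne')
  refine ⟨hi, ?_⟩
  rw [intervalIntegral.integral_eq_sub_of_hasDerivAt (f := fun t => Real.log (1 + a * t)) _ hi]
  · simp
  · intro t ht
    have h : HasDerivAt (fun t : ℝ => 1 + a * t) a t := by
      simpa using ((hasDerivAt_id t).const_mul a).const_add 1
    exact h.log (hpos t ht).ne'

/-- there is an absolute constant `A > 0` such that for all real `u ≥ 1`
and all complex `s` with `Re s > 0`, `|G(u,s)| ≤ A log(1 + |s|/u)`, and moreover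
`|G(u,s)| ≤ A ∫_0^{1/u} min(|s|, 1/t) dt`. -/
theorem G_bound :
    ∃ A : ℝ, 0 < A ∧ ∀ (u : ℝ), 1 ≤ u → ∀ (s : ℂ), 0 < s.re →
      ‖G u s‖ ≤ A * Real.log (1 + ‖s‖ / u) ∧
        ‖G u s‖ ≤ A * ∫ t in (0:ℝ)..(1 / u), min ‖s‖ t⁻¹ := by
  refine ⟨4, by norm_num, fun u hu s hs => ?_⟩
  have ha : 0 < ‖s‖ := norm_pos_iff.mpr (fun h => by simp [h] at hs)
  have hb : 0 < 1 / u := by positivity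
  obtain ⟨hi, hl⟩ := G_aux_int ‖s‖ (1 / u) ha hb
  have hm : IntervalIntegrable (fun t : ℝ => min ‖s‖ t⁻¹) volume 0 (1 / u) := by
    refine IntervalIntegrable.mono_fun' (g := fun _ => ‖s‖) (by simp)
      (Measurable.aestronglyMeasurable (by fun_prop)) ?_
    refine (ae_restrict_iff' measurableSet_uIoc).mpr (Filter.Eventually.of_forall fun t ht => ?_)
    rw [Set.uIoc_of_le hb.le] at ht
    have h0 : 0 ≤ t⁻¹ := inv_nonneg.mpr ht.1.le
    simp only
    rw [Real.norm_of_nonneg (le_min ha.le h0)]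
    exact min_le_left _ _
  have hG : ‖G u s‖ ≤ 2 * ∫ t in (0:ℝ)..(1 / u), min ‖s‖ t⁻¹ := by
    rw [← intervalIntegral.integral_const_mul]
    exact intervalIntegral.norm_integral_le_of_norm_le hb.le
      (Filter.Eventually.of_forall fun t ht => G_aux_pt s hs t ht.1) (hm.const_mul 2)
  have hM : ∫ t in (0:ℝ)..(1 / u), min ‖s‖ t⁻¹ ≤ 2 * Real.log (1 + ‖s‖ / u) := by
    rw [div_eq_mul_one_div ‖s‖ u, ← hl, ← intervalIntegral.integral_const_mul]
    exact intervalIntegral.integral_mono_on_of_le_Ioo hb.le hm (hi.const_mul 2)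
      (fun t ht => G_aux_min _ t ha ht.1)
  have := norm_nonneg (G u s)
  constructor <;> linarith
end

section
/- Fix an integer $k \ge 1$ and an integer $j$ with $1 \le j \le k$. For real $u \ge 2$ define $G(u,s) = \int_0^{1/u} \frac{1-e^{-ts}}{t}\,dt$ for $\mathrm{Re}(s)>0$. Then the contour integral $\frac{1}{2\pi i}\int_{1-i\infty}^{1+i\infty} \frac{e^s}{s}\, G(u,s)^j\, (\log u - \log s - \gamma)^{k-j}\,ds$ is $O\big((\log u)^k / u\big)$ as $u \to \infty$. -/
open MeasureTheory Filter Topology Asymptotics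

lemma one_sub_exp_bound (z : ℂ) (hz : z.re ≤ 0) : ‖1 - Complex.exp z‖ ≤ ‖z‖ := by
  have hc : Convex ℝ {w : ℂ | w.re ≤ 0} := convex_halfSpace_re_le 0
  have := Convex.norm_image_sub_le_of_norm_hasDerivWithin_le (f := Complex.exp)
    (f' := Complex.exp) (s := {w : ℂ | w.re ≤ 0}) (C := 1) (x := z) (y := 0)
    (fun x _ => (Complex.hasDerivAt_exp x).hasDerivWithinAt)
    (fun x hx => by rw [Complex.norm_exp]; exact Real.exp_le_one_iff.2 hx) hc hz (by simp)
  simpa using this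

lemma one_sub_exp_bound2 (z : ℂ) (hz : z.re ≤ 0) : ‖1 - Complex.exp z‖ ≤ 2 := by
  have h1 : ‖Complex.exp z‖ ≤ 1 := by rw [Complex.norm_exp]; exact Real.exp_le_one_iff.2 hz
  calc _ ≤ ‖(1:ℂ)‖ + ‖Complex.exp z‖ := norm_sub_le _ _
    _ ≤ 2 := by simp; linarith

lemma re_neg_mul {t : ℝ} (ht : 0 ≤ t) {s : ℂ} (hs : 0 ≤ s.re) : (-(t:ℂ) * s).re ≤ 0 := by
  simp; positivity

lemma integrand_bound {t : ℝ} (ht : 0 < t) {s : ℂ} (hs : 0 ≤ s.re) :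
    ‖(1 - Complex.exp (-(t : ℂ) * s)) / (t : ℂ)‖ ≤ ‖s‖ := by
  rw [norm_div, Complex.norm_real, Real.norm_of_nonneg ht.le, div_le_iff₀ ht]
  refine (one_sub_exp_bound _ (re_neg_mul ht.le hs)).trans ?_
  simp [abs_of_pos ht, mul_comm]

lemma integrand_bound2 {t : ℝ} (ht : 0 < t) {s : ℂ} (hs : 0 ≤ s.re) {ε : ℝ} (h0 : 0 < ε)
    (h1 : ε ≤ 1) :
    ‖(1 - Complex.exp (-(t : ℂ) * s)) / (t : ℂ)‖ ≤ 2 * ‖s‖ ^ ε * t ^ (ε - 1) := by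
  rw [norm_div, Complex.norm_real, Real.norm_of_nonneg ht.le, div_le_iff₀ ht]
  have e : 2 * ‖s‖ ^ ε * t ^ (ε - 1) * t = 2 * (t * ‖s‖) ^ ε := by
    rw [Real.mul_rpow ht.le (norm_nonneg _), Real.rpow_sub_one ht.ne']; field_simp
  rw [e]
  have b1 := one_sub_exp_bound _ (re_neg_mul ht.le hs)
  have b2 := one_sub_exp_bound2 _ (re_neg_mul ht.le hs)
  have : ‖-(t:ℂ) * s‖ = t * ‖s‖ := by simp [abs_of_pos ht]
  rw [this] at b1
  rcases le_total (t * ‖s‖) 1 with h | h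
  · have : t * ‖s‖ ≤ (t * ‖s‖) ^ ε := by
      rcases (show 0 ≤ t * ‖s‖ by positivity).eq_or_lt with h' | h'
      · rw [← h', Real.zero_rpow h0.ne']
      · simpa using Real.rpow_le_rpow_of_exponent_ge h' h h1
    have : 0 ≤ t * ‖s‖ := by positivity
    linarith
  · have := Real.one_le_rpow h h0.le
    linarith

lemma G_bound1 {u : ℝ} (hu : 0 < u) {s : ℂ} (hs : 0 ≤ s.re) : ‖G u s‖ ≤ ‖s‖ / u := by
  have := intervalIntegral.norm_integral_le_of_norm_le_const (a := 0) (b := 1 / u) (C := ‖s‖)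
    (f := fun t : ℝ => (1 - Complex.exp (-(t : ℂ) * s)) / (t : ℂ)) (fun t ht => by
      rw [Set.uIoc_of_le (by positivity)] at ht
      exact integrand_bound ht.1 hs)
  rw [sub_zero, abs_of_pos (by positivity)] at this
  simpa [G, div_eq_mul_inv] using this

lemma G_bound2 {u : ℝ} (hu : 0 < u) {s : ℂ} (hs : 0 ≤ s.re) {ε : ℝ} (h0 : 0 < ε)
    (h1 : ε ≤ 1) : ‖G u s‖ ≤ (2 / ε) * (‖s‖ / u) ^ ε := by
  have h := intervalIntegral.norm_integral_le_of_norm_le (a := 0) (b := 1 / u) (μ := volume)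
    (f := fun t : ℝ => (1 - Complex.exp (-(t : ℂ) * s)) / (t : ℂ))
    (g := fun t : ℝ => 2 * ‖s‖ ^ ε * t ^ (ε - 1)) (by positivity)
    (Eventually.of_forall fun t ht => integrand_bound2 ht.1 hs h0 h1)
    ((intervalIntegral.intervalIntegrable_rpow' (by linarith)).const_mul _)
  rw [intervalIntegral.integral_const_mul, integral_rpow (Or.inl (by linarith))] at h
  refine h.trans (le_of_eq ?_)
  rw [Real.div_rpow (norm_nonneg _) hu.le, Real.div_rpow zero_le_one hu.le]
  simp [h0.ne']
  field_simp

lemma G_hasDeriv {u : ℝ} (hu : 0 < u) {s : ℂ} (hs : 0 < s.re) :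
    HasDerivAt (G u) ((1 - Complex.exp (-s / u)) / s) s := by
  have hs0 : s ≠ 0 := by rintro rfl; simp at hs
  have key := (intervalIntegral.hasDerivAt_integral_of_dominated_loc_of_deriv_le
    (μ := volume) (a := 0) (b := 1 / u)
    (F := fun (s : ℂ) (t : ℝ) => (1 - Complex.exp (-(t : ℂ) * s)) / (t : ℂ))
    (F' := fun (s : ℂ) (t : ℝ) => Complex.exp (-(t : ℂ) * s)) (x₀ := s)
    (s := {w : ℂ | 0 < w.re}) (bound := fun _ => 1)
    ((isOpen_lt continuous_const Complex.continuous_re).mem_nhds hs) ?_ ?_ ?_ ?_ ?_ ?_).2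
  · have e : ∫ t in (0:ℝ)..(1 / u), Complex.exp (-(t : ℂ) * s) = (1 - Complex.exp (-s / u)) / s := by
      have := integral_exp_mul_complex (a := 0) (b := 1 / u) (c := -s) (by simpa using hs0)
      have e2 : ∀ t : ℝ, -(t:ℂ) * s = -s * t := fun t => by ring
      simp_rw [e2]
      rw [this]
      push_cast
      rw [mul_zero, Complex.exp_zero, mul_one_div]
      field_simp
      ring
    rw [e] at key
    exact key
  · exact Eventually.of_forall fun x => (by fun_prop : Measurable _).aestronglyMeasurable
  · rw [intervalIntegrable_iff, Set.uIoc_of_le (by positivity)]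
    refine Measure.integrableOn_of_bounded (M := ‖s‖) (by simp)
      (by fun_prop : Measurable _).aestronglyMeasurable ?_
    filter_upwards [ae_restrict_mem measurableSet_Ioc] with t ht
    exact integrand_bound ht.1 hs.le
  · exact (by fun_prop : Measurable _).aestronglyMeasurable
  · refine Eventually.of_forall fun t ht x hx => ?_
    rw [Set.uIoc_of_le (by positivity)] at ht
    rw [Complex.norm_exp]
    exact Real.exp_le_one_iff.2 (re_neg_mul ht.1.le (le_of_lt hx))
  · exact intervalIntegrable_const
  · refine Eventually.of_forall fun t ht x hx => ?_
    rw [Set.uIoc_of_le (by positivity)] at ht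
    have ht0 : (t:ℂ) ≠ 0 := by exact_mod_cast ht.1.ne'
    have h1 : HasDerivAt (fun x : ℂ => -(t:ℂ) * x) (-(t:ℂ)) x := by
      simpa using (hasDerivAt_id x).const_mul (-(t:ℂ))
    have := (h1.cexp.const_sub 1).div_const (t:ℂ)
    refine this.congr_deriv ?_
    rw [mul_neg, neg_neg, mul_div_cancel_right₀ _ ht0]

lemma dG_bound1 {u : ℝ} (hu : 0 < u) {s : ℂ} (hs : 0 < s.re) :
    ‖(1 - Complex.exp (-s / u)) / s‖ ≤ 1 / u := by
  have hs0 : s ≠ 0 := by rintro rfl; simp at hs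
  have e : -s / u = -((1/u : ℝ) : ℂ) * s := by push_cast; ring
  have := one_sub_exp_bound _ (re_neg_mul (t := 1 / u) (by positivity) hs.le)
  rw [← e] at this
  rw [norm_div, div_le_iff₀ (norm_pos_iff.2 hs0)]
  refine this.trans (le_of_eq ?_)
  simp [abs_of_pos hu]; ring

lemma dG_bound2 {u : ℝ} (hu : 0 < u) {s : ℂ} (hs : 0 < s.re) :
    ‖(1 - Complex.exp (-s / u)) / s‖ ≤ 2 / ‖s‖ := by
  have e : -s / u = -((1/u : ℝ) : ℂ) * s := by push_cast; ring
  have := one_sub_exp_bound2 _ (re_neg_mul (t := 1 / u) (by positivity) hs.le)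
  rw [← e] at this
  rw [norm_div]
  gcongr

/-- the logarithmic factor -/
noncomputable def LL (u : ℝ) (s : ℂ) : ℂ :=
  (Real.log u : ℂ) - Complex.log s - (Real.eulerMascheroniConstant : ℂ)

lemma LL_bound {u : ℝ} (hu : 0 < u) {s : ℂ} (hs : 0 < s.re) :
    ‖LL u s‖ ≤ |Real.log (‖s‖ / u)| + 4 := by
  have hs0 : s ≠ 0 := by rintro rfl; simp at hs
  have e : LL u s = -((Real.log (‖s‖ / u) : ℝ) : ℂ) - (Complex.arg s : ℂ) * Complex.I
      - (Real.eulerMascheroniConstant : ℂ) := by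
    rw [Real.log_div (norm_ne_zero_iff.2 hs0) hu.ne', LL, Complex.log]
    push_cast; ring
  rw [e]
  have h1 : |Complex.arg s| ≤ Real.pi := Complex.abs_arg_le_pi s
  have h2 := Real.pi_lt_d2
  have h3 := Real.eulerMascheroniConstant_lt_two_thirds
  have h4 := Real.one_half_lt_eulerMascheroniConstant
  have h5 : |Real.eulerMascheroniConstant| = Real.eulerMascheroniConstant :=
    abs_of_pos (by linarith)
  refine (norm_sub_le _ _).trans ?_
  refine (add_le_add_left (norm_sub_le _ _) _).trans ?_
  rw [norm_neg, norm_mul, Complex.norm_I, Complex.norm_real, Complex.norm_real, Complex.norm_real,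
    Real.norm_eq_abs, Real.norm_eq_abs, Real.norm_eq_abs, h5]
  linarith

lemma LL_hasDeriv {u : ℝ} {s : ℂ} (hs : 0 < s.re) :
    HasDerivAt (LL u) (-s⁻¹) s := by
  have := ((Complex.hasDerivAt_log (Or.inl hs)).const_sub (Real.log u : ℂ)).sub_const
    (Real.eulerMascheroniConstant : ℂ)
  exact this

/-- the non-exponential part of the integrand -/
noncomputable def FF (j n : ℕ) (u : ℝ) (s : ℂ) : ℂ := s⁻¹ * G u s ^ j * LL u s ^ n

/-- derivative of `FF` -/
noncomputable def DD (j n : ℕ) (u : ℝ) (s : ℂ) : ℂ :=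
  (-(s^2)⁻¹) * G u s ^ j * LL u s ^ n
    + s⁻¹ * (j * G u s ^ (j-1) * ((1 - Complex.exp (-s / u)) / s)) * LL u s ^ n
    + s⁻¹ * G u s ^ j * (n * LL u s ^ (n-1) * (-s⁻¹))

lemma FF_hasDeriv (j n : ℕ) {u : ℝ} (hu : 0 < u) {s : ℂ} (hs : 0 < s.re) :
    HasDerivAt (FF j n u) (DD j n u s) s := by
  have hs0 : s ≠ 0 := by rintro rfl; simp at hs
  have := (((hasDerivAt_inv hs0).mul ((G_hasDeriv hu hs).pow j)).mul
    ((LL_hasDeriv (u := u) hs).pow n))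
  refine this.congr_deriv ?_
  simp only [DD, Pi.mul_apply, Pi.pow_apply]
  ring

lemma DD_bound (j n : ℕ) {u g l h : ℝ} {s : ℂ}
    (hg : ‖G u s‖ ≤ g) (hl : ‖LL u s‖ ≤ l) (hh : ‖(1 - Complex.exp (-s / u)) / s‖ ≤ h) :
    ‖DD j n u s‖ ≤ g ^ j * l ^ n / ‖s‖ ^ 2 + j * (g ^ (j-1) * h * l ^ n / ‖s‖)
      + n * (g ^ j * l ^ (n-1) / ‖s‖ ^ 2) := by
  have hg0 := (norm_nonneg _).trans hg
  have hl0 := (norm_nonneg _).trans hl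
  have hh0 := (norm_nonneg _).trans hh
  unfold DD
  refine (norm_add₃_le).trans ?_
  have a1 : ‖(-(s^2)⁻¹) * G u s ^ j * LL u s ^ n‖ ≤ (‖s‖^2)⁻¹ * g ^ j * l ^ n := by
    rw [norm_mul, norm_mul, norm_neg, norm_inv, norm_pow, norm_pow, norm_pow]; gcongr
  have a2 : ‖s⁻¹ * (j * G u s ^ (j-1) * ((1 - Complex.exp (-s / u)) / s)) * LL u s ^ n‖ ≤
      ‖s‖⁻¹ * (j * g ^ (j-1) * h) * l ^ n := by
    rw [norm_mul, norm_mul, norm_mul, norm_mul, norm_inv, norm_pow, norm_pow, Complex.norm_natCast]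
    gcongr
  have a3 : ‖s⁻¹ * G u s ^ j * (n * LL u s ^ (n-1) * (-s⁻¹))‖ ≤
      ‖s‖⁻¹ * g ^ j * (n * l ^ (n-1) * ‖s‖⁻¹) := by
    rw [norm_mul, norm_mul, norm_mul, norm_mul, norm_neg, norm_inv, norm_pow, norm_pow,
      Complex.norm_natCast]
    gcongr
  refine (add_le_add (add_le_add a1 a2) a3).trans (le_of_eq ?_)
  ring

lemma DD_small {j n k : ℕ} (hj : 1 ≤ j) (hk : j + n = k) {u : ℝ} (hu : 2 ≤ u) {s : ℂ}
    (hs : s.re = 1) (hsu : ‖s‖ ≤ u) :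
    ‖DD j n u s‖ ≤ (k + 1) * (Real.log u + 4) ^ (k - 1) / u * ‖s‖⁻¹ := by
  have hu0 : 0 < u := by linarith
  have hs' : 0 < s.re := by rw [hs]; norm_num
  have hx1 : 1 ≤ ‖s‖ := by
    have := Complex.abs_re_le_norm s
    rwa [hs, abs_one] at this
  have hx0 : 0 < ‖s‖ := by linarith
  have hlu : 0 ≤ Real.log u := Real.log_nonneg (by linarith)
  have hl : ‖LL u s‖ ≤ Real.log u + 4 := by
    refine (LL_bound hu0 hs').trans ?_
    have h1 : Real.log ‖s‖ ≤ Real.log u := Real.log_le_log hx0 hsu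
    have h2 : 0 ≤ Real.log ‖s‖ := Real.log_nonneg hx1
    rw [Real.log_div hx0.ne' hu0.ne']
    have : |Real.log ‖s‖ - Real.log u| ≤ Real.log u := by rw [abs_le]; constructor <;> linarith
    linarith
  have B := DD_bound j n (G_bound1 hu0 hs'.le) hl (dG_bound1 hu0 hs')
  refine B.trans ?_
  set l := Real.log u + 4
  set x := ‖s‖
  have hl1 : 1 ≤ l := by simp only [l]; linarith
  have hy0 : 0 ≤ x / u := by positivity
  have hy1 : x / u ≤ 1 := by rwa [div_le_one hu0]
  have g1 : (x / u) ^ j ≤ x / u := by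
    simpa using pow_le_pow_of_le_one hy0 hy1 hj
  have g2 : (x / u) ^ (j - 1) ≤ 1 := pow_le_one₀ hy0 hy1
  have l1 : l ^ n ≤ l ^ (k - 1) := pow_le_pow_right₀ hl1 (by omega)
  have l2 : l ^ (n - 1) ≤ l ^ (k - 1) := pow_le_pow_right₀ hl1 (by omega)
  have l0 : 0 < l := by linarith
  have t1 : (x / u) ^ j * l ^ n / x ^ 2 ≤ l ^ (k-1) / u * x⁻¹ := by
    calc (x / u) ^ j * l ^ n / x ^ 2 ≤ (x / u) * l ^ (k-1) / x ^ 2 := by gcongr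
      _ = _ := by field_simp
  have t2 : (x / u) ^ (j - 1) * (1 / u) * l ^ n / x ≤ l ^ (k-1) / u * x⁻¹ := by
    calc (x / u) ^ (j-1) * (1 / u) * l ^ n / x ≤ 1 * (1 / u) * l ^ (k-1) / x := by gcongr
      _ = _ := by field_simp
  have t3 : (x / u) ^ j * l ^ (n-1) / x ^ 2 ≤ l ^ (k-1) / u * x⁻¹ := by
    calc (x / u) ^ j * l ^ (n-1) / x ^ 2 ≤ (x / u) * l ^ (k-1) / x ^ 2 := by gcongr
      _ = _ := by field_simp
  calc _ ≤ l ^ (k-1) / u * x⁻¹ + j * (l ^ (k-1) / u * x⁻¹) + n * (l ^ (k-1) / u * x⁻¹) := by gcongr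
    _ = _ := by rw [← hk]; push_cast; ring

lemma large_aux {k : ℕ} (hk1 : 1 ≤ k) {u : ℝ} (hu : 2 ≤ u) {s : ℂ}
    (hs : s.re = 1) (hsu : u ≤ ‖s‖) :
    ∃ q : ℝ, 1 ≤ q ∧ ‖G u s‖ ≤ q ∧ ‖LL u s‖ ≤ q ∧
      q ^ k = (4 * k + 4) ^ k * (‖s‖ / u) ^ (1 / 2 : ℝ) := by
  have hu0 : 0 < u := by linarith
  have hs' : 0 < s.re := by rw [hs]; norm_num
  have hx0 : 0 < ‖s‖ := by linarith
  have hk0 : (0:ℝ) < k := by exact_mod_cast hk1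
  have hk1' : (1:ℝ) ≤ k := by exact_mod_cast hk1
  have hy1 : 1 ≤ ‖s‖ / u := by rwa [one_le_div hu0]
  have he0 : (0:ℝ) < 1 / (2 * k) := by positivity
  have hG := G_bound2 hu0 hs'.le (ε := 1 / (2 * k)) he0
    (by rw [div_le_one (by positivity)]; linarith)
  have hL := LL_bound hu0 hs'
  rw [abs_of_nonneg (Real.log_nonneg hy1)] at hL
  have hlog := Real.log_le_rpow_div (x := ‖s‖ / u) (by linarith) he0
  have hp := Real.one_le_rpow hy1 he0.le
  have hpk : ((‖s‖ / u) ^ (1 / (2 * k) : ℝ)) ^ k = (‖s‖ / u) ^ (1 / 2 : ℝ) := by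
    rw [← Real.rpow_natCast, ← Real.rpow_mul (by linarith)]
    congr 1; field_simp
  set p := (‖s‖ / u) ^ (1 / (2 * k) : ℝ)
  refine ⟨(4 * k + 4) * p, ?_, ?_, ?_, ?_⟩
  · nlinarith
  · have : (2 / (1 / (2 * k)) : ℝ) = 4 * k := by field_simp; ring
    rw [this] at hG
    nlinarith
  · have : p / (1 / (2 * k)) = 2 * k * p := by field_simp
    rw [this] at hlog
    nlinarith
  · rw [mul_pow, hpk]

lemma DD_large {j n k : ℕ} (hj : 1 ≤ j) (hk : j + n = k) {u : ℝ} (hu : 2 ≤ u) {s : ℂ}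
    (hs : s.re = 1) (hsu : u ≤ ‖s‖) :
    ‖DD j n u s‖ ≤ 2 * (k + 1) * (4 * k + 4) ^ k * ((‖s‖ / u) ^ (1 / 2 : ℝ) / ‖s‖ ^ 2) := by
  obtain ⟨q, hq1, hG, hL, hqk⟩ := large_aux (k := k) (by omega) hu hs hsu
  have hu0 : 0 < u := by linarith
  have hs' : 0 < s.re := by rw [hs]; norm_num
  have hx0 : 0 < ‖s‖ := by linarith
  have B := DD_bound j n hG hL (dG_bound2 hu0 hs')
  refine B.trans ?_
  set x := ‖s‖
  have p1 : q ^ j * q ^ n ≤ q ^ k := by rw [← pow_add]; exact pow_le_pow_right₀ hq1 (by omega)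
  have p2 : q ^ (j-1) * q ^ n ≤ q ^ k := by rw [← pow_add]; exact pow_le_pow_right₀ hq1 (by omega)
  have p3 : q ^ j * q ^ (n-1) ≤ q ^ k := by rw [← pow_add]; exact pow_le_pow_right₀ hq1 (by omega)
  have t2 : q ^ (j - 1) * (2 / x) * q ^ n / x ≤ 2 * (q ^ k / x ^ 2) := by
    calc _ = 2 * ((q ^ (j - 1) * q ^ n) / x ^ 2) := by field_simp
      _ ≤ _ := by gcongr
  have hz : 0 ≤ q ^ k / x ^ 2 := by positivity
  have hn : (0:ℝ) ≤ n := by positivity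
  calc _ ≤ q ^ k / x ^ 2 + j * (2 * (q ^ k / x ^ 2)) + n * (q ^ k / x ^ 2) := by gcongr
    _ ≤ 2 * (k + 1) * (q ^ k / x ^ 2) := by
      have hkk : (k:ℝ) = j + n := by rw [← hk]; push_cast; ring
      rw [hkk]; nlinarith [mul_nonneg hn hz]
    _ = _ := by rw [hqk]; ring

lemma FF_large {j n k : ℕ} (hj : 1 ≤ j) (hk : j + n = k) {u : ℝ} (hu : 2 ≤ u) {s : ℂ}
    (hs : s.re = 1) (hsu : u ≤ ‖s‖) :
    ‖FF j n u s‖ ≤ (4 * k + 4) ^ k * ‖s‖ ^ (-(1 / 2) : ℝ) := by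
  obtain ⟨q, hq1, hG, hL, hqk⟩ := large_aux (k := k) (by omega) hu hs hsu
  have hx0 : 0 < ‖s‖ := by linarith
  have h1 : ‖FF j n u s‖ ≤ ‖s‖⁻¹ * q ^ j * q ^ n := by
    rw [FF, norm_mul, norm_mul, norm_inv, norm_pow, norm_pow]; gcongr
  rw [mul_assoc, ← pow_add, hk, hqk] at h1
  refine h1.trans ?_
  have h2 : (‖s‖ / u) ^ (1 / 2 : ℝ) ≤ ‖s‖ ^ (1 / 2 : ℝ) := by
    apply Real.rpow_le_rpow (by positivity) _ (by norm_num)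
    exact div_le_self hx0.le (by linarith)
  have h3 : ‖s‖ ^ (-(1 / 2) : ℝ) = ‖s‖⁻¹ * ‖s‖ ^ (1 / 2 : ℝ) := by
    rw [← Real.rpow_neg_one, ← Real.rpow_add hx0]; norm_num
  rw [h3]
  calc _ ≤ ‖s‖⁻¹ * ((4 * k + 4) ^ k * ‖s‖ ^ (1 / 2 : ℝ)) := by gcongr
    _ = _ := by ring

lemma rpow_aux {u x r : ℝ} (hu : 0 < u) (hr : 0 < r) (hrx : r ≤ x) :
    (x / u) ^ (1 / 2 : ℝ) / x ^ 2 ≤ u ^ (-(1 / 2) : ℝ) * r ^ (-(3 / 2) : ℝ) := by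
  have hx : 0 < x := by linarith
  have : (x / u) ^ (1 / 2 : ℝ) / x ^ 2 = u ^ (-(1 / 2) : ℝ) * x ^ (-(3 / 2) : ℝ) := by
    rw [Real.div_rpow hx.le hu.le, Real.rpow_neg hu.le,
      show (-(3/2) : ℝ) = 1 / 2 - 2 by norm_num, Real.rpow_sub hx]
    norm_cast
    ring
  rw [this]
  gcongr 1
  exact Real.rpow_le_rpow_of_nonpos hr hrx (by norm_num)

/-- one-sided majorant -/
noncomputable def maj (A B u : ℝ) (r : ℝ) : ℝ :=
  (Set.Icc 0 u).indicator (fun r => A * (1 + r)⁻¹) r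
    + (Set.Ioi (u / 2)).indicator (fun r => B * r ^ (-(3 / 2) : ℝ)) r

lemma maj_nonneg {A B u : ℝ} (hA : 0 ≤ A) (hB : 0 ≤ B) (hu : 0 < u) (r : ℝ) : 0 ≤ maj A B u r := by
  unfold maj
  apply add_nonneg
  · apply Set.indicator_nonneg
    intro r hr
    have := hr.1
    positivity
  · apply Set.indicator_nonneg
    intro r hr
    have : 0 < r := lt_trans (by positivity) hr
    positivity

lemma maj_int {A B u : ℝ} (hu : 0 < u) : Integrable (maj A B u) ∧
    ∫ r, maj A B u r = A * Real.log (1 + u) + B * (2 * (u / 2) ^ (-(1 / 2) : ℝ)) := by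
  have c1 : ContinuousOn (fun r : ℝ => A * (1 + r)⁻¹) (Set.Icc 0 u) := by
    apply ContinuousOn.mul continuousOn_const
    apply ContinuousOn.inv₀ (by fun_prop)
    intro r hr; have := hr.1; positivity
  have i1 : Integrable ((Set.Icc 0 u).indicator (fun r => A * (1 + r)⁻¹)) :=
    (integrable_indicator_iff measurableSet_Icc).2 (c1.integrableOn_Icc)
  have i2 : Integrable ((Set.Ioi (u / 2)).indicator (fun r : ℝ => B * r ^ (-(3 / 2) : ℝ))) :=
    (integrable_indicator_iff measurableSet_Ioi).2
      ((integrableOn_Ioi_rpow_of_lt (by norm_num) (by positivity)).const_mul B)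
  refine ⟨i1.add i2, ?_⟩
  unfold maj
  rw [integral_add i1 i2, integral_indicator measurableSet_Icc, integral_indicator measurableSet_Ioi,
    integral_const_mul, integral_const_mul, integral_Ioi_rpow_of_lt (by norm_num) (by positivity),
    integral_Icc_eq_integral_Ioc, ← intervalIntegral.integral_of_le hu.le]
  have : ∫ r in (0:ℝ)..u, (1 + r)⁻¹ = Real.log (1 + u) := by
    rw [intervalIntegral.integral_comp_add_left (fun x => x⁻¹) 1, integral_inv_of_pos (by norm_num) (by linarith)]
    simp
  rw [this]
  congr 2
  norm_num
  ring

lemma norm_line (t : ℝ) : 1 ≤ ‖1 + (t:ℂ) * Complex.I‖ ∧ |t| ≤ ‖1 + (t:ℂ) * Complex.I‖ ∧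
    ‖1 + (t:ℂ) * Complex.I‖ ≤ 1 + |t| := by
  refine ⟨?_, ?_, ?_⟩
  · simpa using Complex.abs_re_le_norm (1 + (t:ℂ) * Complex.I)
  · simpa using Complex.abs_im_le_norm (1 + (t:ℂ) * Complex.I)
  · simpa using norm_add_le (1:ℂ) ((t:ℂ) * Complex.I)

lemma DD_maj {j n k : ℕ} (hj : 1 ≤ j) (hk : j + n = k) {u : ℝ} (hu : 2 ≤ u) (t : ℝ) :
    ‖DD j n u (1 + (t:ℂ) * Complex.I)‖ ≤
      maj (2 * ((k + 1) * (Real.log u + 4) ^ (k - 1) / u))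
        (2 * (k + 1) * (4 * k + 4) ^ k * u ^ (-(1 / 2) : ℝ)) u |t| := by
  obtain ⟨h1, h2, h3⟩ := norm_line t
  have hlu : 0 ≤ Real.log u := Real.log_nonneg (by linarith)
  have hu0 : 0 < u := by linarith
  unfold maj
  rcases le_total ‖1 + (t:ℂ) * Complex.I‖ u with h | h
  · have B := DD_small hj hk hu (by simp) h
    have hin : |t| ∈ Set.Icc 0 u := ⟨abs_nonneg _, h2.trans h⟩
    rw [Set.indicator_of_mem hin]
    refine B.trans (le_trans ?_ (le_add_of_nonneg_right ?_))
    · rw [mul_comm (2:ℝ), mul_assoc _ (2:ℝ)]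
      gcongr
      rw [← div_eq_mul_inv, inv_eq_one_div, div_le_div_iff₀ (by linarith) (by positivity)]
      linarith
    · apply Set.indicator_nonneg
      intro r hr
      have : 0 < r := lt_trans (by positivity) hr
      positivity
  · rcases h.eq_or_lt with h' | h'
    · have B := DD_small hj hk hu (by simp) h'.ge
      have hin : |t| ∈ Set.Icc 0 u := ⟨abs_nonneg _, h2.trans h'.ge⟩
      rw [Set.indicator_of_mem hin]
      refine B.trans (le_trans ?_ (le_add_of_nonneg_right ?_))
      · rw [mul_comm (2:ℝ), mul_assoc _ (2:ℝ)]
        gcongr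
        rw [← div_eq_mul_inv, inv_eq_one_div, div_le_div_iff₀ (by linarith) (by positivity)]
        linarith
      · apply Set.indicator_nonneg
        intro r hr
        have : 0 < r := lt_trans (by positivity) hr
        positivity
    have B := DD_large hj hk hu (by simp) h
    have hin : |t| ∈ Set.Ioi (u / 2) := by simp only [Set.mem_Ioi]; linarith
    have ht0 : 0 < |t| := lt_trans (by positivity) hin
    rw [Set.indicator_of_mem hin]
    refine B.trans (le_trans ?_ (le_add_of_nonneg_left ?_))
    · rw [mul_assoc _ (u ^ _)]
      gcongr
      exact rpow_aux hu0 ht0 h2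
    · apply Set.indicator_nonneg
      intro r hr
      have := hr.1
      positivity

lemma line_hasDeriv (t : ℝ) : HasDerivAt (fun t : ℝ => 1 + (t:ℂ) * Complex.I) Complex.I t := by
  have := ((Complex.ofRealCLM.hasDerivAt (x := t)).mul_const Complex.I).const_add 1
  simpa using this

lemma line_cont : Continuous (fun t : ℝ => 1 + (t:ℂ) * Complex.I) := by fun_prop

lemma line_re (t : ℝ) : 0 < (1 + (t:ℂ) * Complex.I).re := by simp

lemma line_ne (t : ℝ) : (1 + (t:ℂ) * Complex.I) ≠ 0 := by
  intro h
  have := line_re t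
  rw [h] at this
  simp at this

lemma G_cont {u : ℝ} (hu : 0 < u) : Continuous (fun t : ℝ => G u (1 + (t:ℂ) * Complex.I)) :=
  continuous_iff_continuousAt.2 fun t =>
    ContinuousAt.comp (f := fun t : ℝ => 1 + (t:ℂ) * Complex.I)
      (G_hasDeriv hu (line_re t)).continuousAt line_cont.continuousAt

lemma LL_cont {u : ℝ} : Continuous (fun t : ℝ => LL u (1 + (t:ℂ) * Complex.I)) :=
  continuous_iff_continuousAt.2 fun t =>
    ContinuousAt.comp (f := fun t : ℝ => 1 + (t:ℂ) * Complex.I)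
      (LL_hasDeriv (line_re t)).continuousAt line_cont.continuousAt

lemma FF_cont (j n : ℕ) {u : ℝ} (hu : 0 < u) :
    Continuous (fun t : ℝ => FF j n u (1 + (t:ℂ) * Complex.I)) := by
  unfold FF
  have h1 := G_cont hu
  have h2 := LL_cont (u := u)
  fun_prop (disch := exact line_ne)

lemma DD_cont (j n : ℕ) {u : ℝ} (hu : 0 < u) :
    Continuous (fun t : ℝ => DD j n u (1 + (t:ℂ) * Complex.I)) := by
  unfold DD
  have h1 := G_cont hu
  have h2 := LL_cont (u := u)
  simp only [div_eq_mul_inv]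
  fun_prop (disch := first | exact line_ne | exact fun x => pow_ne_zero 2 (line_ne x))

lemma DD_integrable {j n k : ℕ} (hj : 1 ≤ j) (hk : j + n = k) {u : ℝ} (hu : 2 ≤ u) :
    Integrable (fun t : ℝ => Complex.exp (1 + t * Complex.I) * DD j n u (1 + t * Complex.I)
      * Complex.I) ∧
    ‖∫ t : ℝ, Complex.exp (1 + t * Complex.I) * DD j n u (1 + t * Complex.I) * Complex.I‖ ≤
      2 * Real.exp 1 * ((2 * ((k + 1) * (Real.log u + 4) ^ (k - 1) / u)) * Real.log (1 + u)
       + (2 * (k + 1) * (4 * k + 4) ^ k * u ^ (-(1 / 2) : ℝ)) * (2 * (u / 2) ^ (-(1 / 2) : ℝ))) := by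
  have hu0 : 0 < u := by linarith
  have hlu : 0 ≤ Real.log u := Real.log_nonneg (by linarith)
  set A := 2 * ((k + 1) * (Real.log u + 4) ^ (k - 1) / u)
  set B := 2 * (k + 1) * (4 * k + 4) ^ k * u ^ (-(1 / 2) : ℝ)
  have hA : 0 ≤ A := by positivity
  have hB : 0 ≤ B := by positivity
  obtain ⟨mi, me⟩ := maj_int (A := A) (B := B) hu0
  have bi : Integrable (fun t => Real.exp 1 * (maj A B u t + maj A B u (-t))) :=
    (mi.add mi.comp_neg).const_mul _
  have hb : ∀ t : ℝ, ‖Complex.exp (1 + t * Complex.I) * DD j n u (1 + t * Complex.I) * Complex.I‖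
      ≤ Real.exp 1 * (maj A B u t + maj A B u (-t)) := by
    intro t
    rw [norm_mul, norm_mul, Complex.norm_I, mul_one, Complex.norm_exp]
    have : (1 + (t:ℂ) * Complex.I).re = 1 := by simp
    rw [this]
    gcongr
    refine (DD_maj hj hk hu t).trans ?_
    have n1 := maj_nonneg hA hB hu0 t
    have n2 := maj_nonneg hA hB hu0 (-t)
    rcases abs_choice t with h | h <;> rw [h] <;> linarith
  constructor
  · refine bi.mono' ?_ (Eventually.of_forall hb)
    have := DD_cont j n hu0
    exact Continuous.aestronglyMeasurable (by fun_prop)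
  · refine (MeasureTheory.norm_integral_le_of_norm_le bi (Eventually.of_forall hb)).trans (le_of_eq ?_)
    rw [integral_const_mul, integral_add mi mi.comp_neg, integral_neg_eq_self (fun t => maj A B u t), me]
    ring

lemma parts (j n : ℕ) {u : ℝ} (hu : 0 < u) (T : ℝ) :
    ∫ t in (-T)..T, Complex.exp (1 + t * Complex.I) * FF j n u (1 + t * Complex.I) * Complex.I =
      Complex.exp (1 + T * Complex.I) * FF j n u (1 + T * Complex.I)
      - Complex.exp (1 + (-T : ℝ) * Complex.I) * FF j n u (1 + (-T : ℝ) * Complex.I)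
      - ∫ t in (-T)..T, Complex.exp (1 + t * Complex.I) * DD j n u (1 + t * Complex.I)
        * Complex.I := by
  have c1 := FF_cont j n hu
  have c2 := DD_cont j n hu
  have hd : ∀ t : ℝ, HasDerivAt
      (fun t : ℝ => Complex.exp (1 + t * Complex.I) * FF j n u (1 + t * Complex.I))
      (Complex.exp (1 + t * Complex.I) * FF j n u (1 + t * Complex.I) * Complex.I +
       Complex.exp (1 + t * Complex.I) * DD j n u (1 + t * Complex.I) * Complex.I) t := by
    intro t
    have h1 := (line_hasDeriv t).cexp
    have h2 := HasDerivAt.comp t (h := fun t : ℝ => 1 + (t:ℂ) * Complex.I)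
      (FF_hasDeriv j n hu (line_re t)) (line_hasDeriv t)
    refine (h1.mul h2).congr_deriv ?_
    simp only [Function.comp]
    ring
  have i1 : IntervalIntegrable (fun t : ℝ => Complex.exp (1 + t * Complex.I) *
      FF j n u (1 + t * Complex.I) * Complex.I) volume (-T) T :=
    Continuous.intervalIntegrable (by fun_prop) _ _
  have i2 : IntervalIntegrable (fun t : ℝ => Complex.exp (1 + t * Complex.I) *
      DD j n u (1 + t * Complex.I) * Complex.I) volume (-T) T :=
    Continuous.intervalIntegrable (by fun_prop) _ _
  have := intervalIntegral.integral_eq_sub_of_hasDerivAt (fun t _ => hd t) (i1.add i2)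
  rw [intervalIntegral.integral_add i1 i2] at this
  rw [← this]
  ring

lemma bdry {j n k : ℕ} (hj : 1 ≤ j) (hk : j + n = k) {u : ℝ} (hu : 2 ≤ u) {a : ℝ → ℝ}
    (ha : Tendsto (fun T => |a T|) atTop atTop) :
    Tendsto (fun T : ℝ => Complex.exp (1 + a T * Complex.I) * FF j n u (1 + a T * Complex.I))
      atTop (𝓝 0) := by
  have hx : Tendsto (fun T => ‖1 + (a T : ℂ) * Complex.I‖) atTop atTop :=
    tendsto_atTop_mono (fun T => (norm_line (a T)).2.1) ha
  have h0 : Tendsto (fun T => Real.exp 1 * ((4 * k + 4) ^ k *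
      ‖1 + (a T : ℂ) * Complex.I‖ ^ (-(1 / 2) : ℝ))) atTop (𝓝 0) := by
    have := (((tendsto_rpow_neg_atTop (y := 1 / 2) (by norm_num)).comp hx).const_mul
      (((4:ℝ) * k + 4) ^ k)).const_mul (Real.exp 1)
    simpa using this
  refine squeeze_zero_norm' ?_ h0
  filter_upwards [hx.eventually_ge_atTop u] with T hT
  rw [norm_mul, Complex.norm_exp]
  have : (1 + (a T:ℂ) * Complex.I).re = 1 := by simp
  rw [this]
  gcongr
  exact FF_large hj hk hu this hT

theorem error_term_bound (k j : ℕ) (hk : 1 ≤ k) (hj1 : 1 ≤ j) (hjk : j ≤ k) :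
    ∃ V : ℝ → ℂ,
      (∀ u : ℝ, 2 ≤ u →
        Tendsto (fun T : ℝ =>
            (1 / (2 * Real.pi * Complex.I)) *
              ∫ t in (-T)..T,
                (Complex.exp (1 + t * Complex.I) / (1 + t * Complex.I)) *
                  G u (1 + t * Complex.I) ^ j *
                  ((Real.log u : ℂ) - Complex.log (1 + t * Complex.I) -
                    (Real.eulerMascheroniConstant : ℂ)) ^ (k - j) * Complex.I)
          atTop (𝓝 (V u))) ∧
      V =O[atTop] fun u : ℝ => Real.log u ^ k / u := by
  have hkn : j + (k - j) = k := by omega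
  refine ⟨fun u => (1 / (2 * Real.pi * Complex.I)) * (0 - 0 - ∫ t : ℝ,
    Complex.exp (1 + t * Complex.I) * DD j (k - j) u (1 + t * Complex.I) * Complex.I), ?_, ?_⟩
  · intro u hu
    have hu0 : 0 < u := by linarith
    refine Tendsto.const_mul _ ?_
    have e : ∀ T : ℝ, ∫ t in (-T)..T,
                (Complex.exp (1 + t * Complex.I) / (1 + t * Complex.I)) *
                  G u (1 + t * Complex.I) ^ j *
                  ((Real.log u : ℂ) - Complex.log (1 + t * Complex.I) -
                    (Real.eulerMascheroniConstant : ℂ)) ^ (k - j) * Complex.I =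
        ∫ t in (-T)..T, Complex.exp (1 + t * Complex.I) * FF j (k - j) u (1 + t * Complex.I)
          * Complex.I := by
      intro T
      congr 1
      ext t
      simp only [FF, LL]
      ring
    simp_rw [e, parts j (k - j) hu0]
    refine ((bdry hj1 hkn hu (a := fun T => T) tendsto_abs_atTop_atTop).sub
      (bdry hj1 hkn hu (a := fun T => -T) ?_)).sub ?_
    · simpa using tendsto_abs_atTop_atTop (G := ℝ)
    · exact intervalIntegral_tendsto_integral (DD_integrable hj1 hkn hu).1
        tendsto_neg_atTop_atBot tendsto_id
  · refine IsBigO.of_bound (‖1 / (2 * Real.pi * Complex.I)‖ * (2 * Real.exp 1 *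
      (2 * ((k + 1) * 5 ^ (k - 1)) * 2 + 2 * (k + 1) * (4 * k + 4) ^ k * 4))) ?_
    filter_upwards [eventually_ge_atTop (Real.exp 1), eventually_ge_atTop 2] with u hu1 hu
    have hu0 : 0 < u := by linarith
    have hl1 : 1 ≤ Real.log u := by
      rw [Real.le_log_iff_exp_le hu0]; exact hu1
    have hB := (DD_integrable hj1 hkn hu).2
    rw [norm_mul, sub_zero, zero_sub, norm_neg, mul_assoc ‖_‖]
    refine mul_le_mul_of_nonneg_left (hB.trans ?_) (norm_nonneg _)
    rw [mul_assoc (2 * Real.exp 1)]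
    refine mul_le_mul_of_nonneg_left ?_ (by positivity)
    have hlog : Real.log (1 + u) ≤ 2 * Real.log u := by
      have : Real.log (1 + u) ≤ Real.log (u ^ 2) := Real.log_le_log (by positivity) (by nlinarith)
      simpa using this
    have hlog0 : 0 ≤ Real.log (1 + u) := Real.log_nonneg (by linarith)
    rw [Real.norm_of_nonneg (by positivity),
      add_mul (2 * (((k:ℝ) + 1) * 5 ^ (k - 1)) * 2)]
    have hpk : Real.log u ^ k = Real.log u ^ (k-1) * Real.log u := by
      rw [← pow_succ]; congr 1; omega
    refine add_le_add ?_ ?_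
    · calc _ ≤ 2 * ((k + 1) * (5 * Real.log u) ^ (k - 1) / u) * (2 * Real.log u) := by
            gcongr
            linarith
        _ = _ := by rw [hpk, mul_pow]; ring
    · have h1 : u ^ (-(1 / 2) : ℝ) * (2 * (u / 2) ^ (-(1 / 2) : ℝ)) ≤ 4 * (1 / u) := by
        have a1 : u ^ (-(1 / 2) : ℝ) ≤ (u / 2) ^ (-(1 / 2) : ℝ) :=
          Real.rpow_le_rpow_of_nonpos (by positivity) (by linarith) (by norm_num)
        have a2 : (u / 2) ^ (-(1 / 2) : ℝ) * (u / 2) ^ (-(1 / 2) : ℝ) = 2 / u := by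
          rw [← Real.rpow_add (by positivity), show (-(1/2) + -(1/2) : ℝ) = -1 by norm_num,
            Real.rpow_neg_one, inv_div]
        calc _ ≤ (u / 2) ^ (-(1 / 2) : ℝ) * (2 * (u / 2) ^ (-(1 / 2) : ℝ)) := by gcongr
          _ = 2 * ((u / 2) ^ (-(1 / 2) : ℝ) * (u / 2) ^ (-(1 / 2) : ℝ)) := by ring
          _ = _ := by rw [a2]; ring
      have h2 : 1 / u ≤ Real.log u ^ k / u := by
        gcongr
        exact one_le_pow₀ hl1
      have h3 : u ^ (-(1 / 2) : ℝ) * (2 * (u / 2) ^ (-(1 / 2) : ℝ)) ≤ 4 * (Real.log u ^ k / u) := by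
        linarith
      have h4 : (0:ℝ) ≤ 2 * (k + 1) * (4 * k + 4) ^ k := by positivity
      calc _ = (2 * (k + 1) * (4 * k + 4) ^ k) *
            (u ^ (-(1 / 2) : ℝ) * (2 * (u / 2) ^ (-(1 / 2) : ℝ))) := by ring
        _ ≤ (2 * (k + 1) * (4 * k + 4) ^ k) * (4 * (Real.log u ^ k / u)) :=
            mul_le_mul_of_nonneg_left h3 h4
        _ = _ := by ring
end

section
/- For any $c > 0$ and any real $\lambda$, the conditionally convergent integral $\frac{1}{2\pi i}\int_{c-i\infty}^{c+i\infty} \frac{e^{\lambda s}}{s}\,ds$, interpreted as $\lim_{T\to\infty}\frac{1}{2\pi i}\int_{c-iT}^{c+iT}\frac{e^{\lambda s}}{s}\,ds$, equals $1$ if $\lambda > 0$, equals $0$ if $\lambda < 0$, and equals $1/2$ if $\lambda = 0$. -/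
open MeasureTheory Filter Topology

lemma perron_rect (g : ℂ → ℂ) (a b T M : ℝ) (hab : a ≤ b) (hT : 0 ≤ T)
    (hg : ∀ z : ℂ, a ≤ z.re → DifferentiableAt ℂ g z)
    (hM : ∀ x y : ℝ, a ≤ x → x ≤ b → |y| = T → ‖g (x + y * Complex.I)‖ ≤ M) :
    ‖(∫ t in (-T)..T, g (b + t * Complex.I)) - ∫ t in (-T)..T, g (a + t * Complex.I)‖
      ≤ 2 * M * (b - a) := by
  have h := Complex.integral_boundary_rect_eq_zero_of_differentiableOn g
    (a + (-T : ℝ) * Complex.I) (b + T * Complex.I) (by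
      intro z hz
      refine (hg z ?_).differentiableWithinAt
      have h1 := hz.1
      simp [Set.uIcc_of_le hab] at h1
      exact h1.1)
  simp only [Complex.add_re, Complex.add_im, Complex.ofReal_re, Complex.ofReal_im, Complex.mul_re,
    Complex.mul_im, Complex.I_re, Complex.I_im, mul_zero, mul_one, zero_mul, sub_zero, add_zero,
    zero_add, smul_eq_mul] at h
  have e1 : ‖∫ x in a..b, g (x + (-T : ℝ) * Complex.I)‖ ≤ M * |b - a| := by
    refine intervalIntegral.norm_integral_le_of_norm_le_const fun x hx => ?_
    rw [Set.uIoc_of_le hab] at hx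
    exact hM x (-T) hx.1.le hx.2 (by rw [abs_neg, abs_of_nonneg hT])
  have e2 : ‖∫ x in a..b, g (x + (T : ℝ) * Complex.I)‖ ≤ M * |b - a| := by
    refine intervalIntegral.norm_integral_le_of_norm_le_const fun x hx => ?_
    rw [Set.uIoc_of_le hab] at hx
    exact hM x T hx.1.le hx.2 (abs_of_nonneg hT)
  rw [abs_of_nonneg (sub_nonneg.2 hab)] at e1 e2
  set A := ∫ x in a..b, g (x + (-T : ℝ) * Complex.I)
  set B := ∫ x in a..b, g (x + (T : ℝ) * Complex.I)
  set C := ∫ t in (-T)..T, g (b + t * Complex.I)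
  set D := ∫ t in (-T)..T, g (a + t * Complex.I)
  have h2 : Complex.I * (C - D) = B - A := by linear_combination h
  have h3 : ‖C - D‖ = ‖B - A‖ := by rw [← h2, norm_mul, Complex.norm_I, one_mul]
  rw [h3]
  linarith [norm_sub_le B A]

/-- the truncated vertical integral -/
noncomputable def perronJ (c l T : ℝ) : ℂ :=
  ∫ t in (-T)..T, Complex.exp ((l : ℂ) * ((c : ℂ) + t * Complex.I)) / ((c : ℂ) + t * Complex.I)

lemma perron_ne (c : ℝ) (hc : c ≠ 0) (t : ℝ) : ((c : ℂ) + t * Complex.I) ≠ 0 := by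
  intro h
  have := congrArg Complex.re h
  simp at this
  exact hc this

lemma perron_exp_norm (l x y : ℝ) :
    ‖Complex.exp ((l : ℂ) * ((x : ℂ) + y * Complex.I))‖ = Real.exp (l * x) := by
  rw [Complex.norm_exp]; simp

lemma perron_im_le (x y : ℝ) : |y| ≤ ‖(x : ℂ) + y * Complex.I‖ := by
  simpa using Complex.abs_im_le_norm ((x : ℂ) + y * Complex.I)

lemma perron_re_le (x y : ℝ) : |x| ≤ ‖(x : ℂ) + y * Complex.I‖ := by
  simpa using Complex.abs_re_le_norm ((x : ℂ) + y * Complex.I)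

lemma perron_neg (c l : ℝ) (hc : 0 < c) (hl : l < 0) :
    Tendsto (perronJ c l) atTop (𝓝 0) := by
  have lim : Tendsto (fun T : ℝ => 2 * (√T)⁻¹ + 2 * (√T * Real.exp (-(-l) * √T))) atTop (𝓝 0) := by
    have h1 : Tendsto (fun T : ℝ => (√T)⁻¹) atTop (𝓝 0) :=
      tendsto_inv_atTop_zero.comp Real.tendsto_sqrt_atTop
    have h2 : Tendsto (fun T : ℝ => √T * Real.exp (-(-l) * √T)) atTop (𝓝 0) := by
      have := (tendsto_rpow_mul_exp_neg_mul_atTop_nhds_zero 1 (-l) (by linarith)).comp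
        Real.tendsto_sqrt_atTop
      simpa [Function.comp_def] using this
    simpa using (h1.const_mul 2).add (h2.const_mul 2)
  refine squeeze_zero_norm' ?_ lim
  filter_upwards [eventually_gt_atTop 0] with T hT
  set u := √T with hu
  have hu0 : 0 < u := Real.sqrt_pos.2 hT
  have hTu : T = u * u := (Real.mul_self_sqrt hT.le).symm
  have r := perron_rect (fun z => Complex.exp (l * z) / z) c (c + u) T (1 / T) (by linarith) hT.le
    (by
      intro z hz
      have : z ≠ 0 := by
        rintro rfl
        simp at hz
        linarith
      fun_prop (disch := assumption))
    (by
      intro x y hx _ hy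
      rw [norm_div, perron_exp_norm]
      have := perron_im_le x y
      rw [hy] at this
      have h1 : Real.exp (l * x) ≤ 1 := by
        rw [Real.exp_le_one_iff]; nlinarith
      gcongr)
  have e : ‖∫ t in (-T)..T, Complex.exp ((l : ℂ) * (((c + u : ℝ) : ℂ) + t * Complex.I)) /
      (((c + u : ℝ) : ℂ) + t * Complex.I)‖ ≤ (Real.exp (l * u) / u) * |T - (-T)| := by
    refine intervalIntegral.norm_integral_le_of_norm_le_const fun x hx => ?_
    rw [norm_div, perron_exp_norm]
    have h0 := perron_re_le (c + u) x
    rw [abs_of_pos (by positivity)] at h0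
    have : u ≤ ‖((c + u : ℝ) : ℂ) + x * Complex.I‖ := by linarith
    have h1 : Real.exp (l * (c + u)) ≤ Real.exp (l * u) := by
      rw [Real.exp_le_exp]; nlinarith
    gcongr
  rw [abs_of_pos (by linarith)] at e
  have e' : (Real.exp (l * u) / u) * (T - (-T)) = 2 * (u * Real.exp (-(-l) * u)) := by
    rw [hTu, neg_neg]; field_simp; ring
  have r' : 2 * (1 / T) * (c + u - c) = 2 * u⁻¹ := by
    rw [hTu]; field_simp; ring
  rw [e'] at e
  rw [r'] at r
  rw [perronJ]
  have := norm_sub_norm_le (∫ t in (-T)..T, Complex.exp ((l : ℂ) * ((c : ℂ) + t * Complex.I)) / ((c : ℂ) + t * Complex.I)) (∫ t in (-T)..T, Complex.exp ((l : ℂ) * (((c + u : ℝ) : ℂ) + t * Complex.I)) /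
      (((c + u : ℝ) : ℂ) + t * Complex.I))
  rw [norm_sub_rev] at this
  linarith

lemma perron_refl (c l T : ℝ) : perronJ (-c) l T = - perronJ c (-l) T := by
  unfold perronJ
  rw [← intervalIntegral.integral_neg]
  have := intervalIntegral.integral_comp_neg (a := -T) (b := T) (fun t : ℝ =>
    Complex.exp ((l : ℂ) * (((-c : ℝ) : ℂ) + t * Complex.I)) / (((-c : ℝ) : ℂ) + t * Complex.I))
  rw [neg_neg] at this
  rw [← this]
  congr 1
  ext t
  rw [← div_neg]
  push_cast
  congr 2 <;> ring

lemma perron_cont (c : ℝ) (hc : c ≠ 0) (l : ℝ) : Continuous (fun t : ℝ =>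
    Complex.exp ((l : ℂ) * ((c : ℂ) + t * Complex.I)) / ((c : ℂ) + t * Complex.I)) := by
  have := perron_ne c hc
  fun_prop (disch := assumption)

lemma perron_zero (c : ℝ) (hc : 0 < c) :
    Tendsto (perronJ c 0) atTop (𝓝 (Real.pi : ℂ)) := by
  have key : ∀ T, perronJ c 0 T =
      -Complex.I * Complex.log (c + T * Complex.I)
        - (-Complex.I * Complex.log (c + (-T : ℝ) * Complex.I)) := by
    intro T
    unfold perronJ
    refine intervalIntegral.integral_eq_sub_of_hasDerivAt
      (f := fun t : ℝ => -Complex.I * Complex.log (c + t * Complex.I)) ?_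
      ((perron_cont c hc.ne' 0).intervalIntegrable _ _)
    intro t _
    have h1 : HasDerivAt (fun t : ℝ => (c : ℂ) + t * Complex.I) Complex.I t := by
      simpa using ((Complex.ofRealCLM.hasDerivAt (x := t)).mul_const Complex.I).const_add (c : ℂ)
    have h2 := (h1.clog_real (by left; simpa using hc)).const_mul (-Complex.I)
    have e : Complex.exp (((0 : ℝ) : ℂ) * ((c : ℂ) + t * Complex.I)) / ((c : ℂ) + t * Complex.I) =
        -Complex.I * (Complex.I / (c + t * Complex.I)) := by
      simp only [Complex.ofReal_zero, zero_mul, Complex.exp_zero]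
      rw [← mul_div_assoc, neg_mul, Complex.I_mul_I, neg_neg]
    rw [e]
    exact h2
  have key2 : ∀ T, perronJ c 0 T = ((2 * Real.arctan (T / c) : ℝ) : ℂ) := by
    intro T
    rw [key]
    have hconj : (c : ℂ) + (-T : ℝ) * Complex.I = (starRingEnd ℂ) (c + T * Complex.I) := by
      simp
    have harg : Complex.arg (c + T * Complex.I) = Real.arctan (T / c) := by
      have hm := Complex.abs_arg_lt_pi_div_two_iff.2
        (Or.inl (show 0 < ((c : ℂ) + T * Complex.I).re by simpa using hc))
      rw [abs_lt] at hm
      rw [← Real.arctan_tan hm.1 hm.2, Complex.tan_arg]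
      simp
    rw [hconj, Complex.log_conj _ (by
      rw [harg]; exact ne_of_lt (by linarith [Real.arctan_lt_pi_div_two (T / c), Real.pi_pos]))]
    rw [← harg, ← Complex.log_im]
    set L := Complex.log (c + T * Complex.I)
    apply Complex.ext <;> simp <;> ring
  rw [show perronJ c 0 = fun T => ((2 * Real.arctan (T / c) : ℝ) : ℂ) from funext key2]
  refine (Complex.continuous_ofReal.tendsto _).comp ?_
  have h := (Real.tendsto_arctan_atTop.mono_right nhdsWithin_le_nhds).comp
    (tendsto_id.atTop_div_const hc)
  have h2 := h.const_mul 2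
  rwa [show 2 * (Real.pi / 2) = Real.pi by ring] at h2

lemma perron_diff (c l : ℝ) (hc : 0 < c) (hl : 0 < l) :
    Tendsto (fun T => (perronJ c l T - perronJ c 0 T) - (perronJ (-c) l T - perronJ (-c) 0 T))
      atTop (𝓝 0) := by
  have hf : Differentiable ℂ (fun z : ℂ => Complex.exp (l * z)) := by fun_prop
  set g : ℂ → ℂ := dslope (fun z : ℂ => Complex.exp (l * z)) 0 with hgdef
  have hg : Differentiable ℂ g := by
    rw [← differentiableOn_univ]
    exact (Complex.differentiableOn_dslope univ_mem).2 hf.differentiableOn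
  have hgv : ∀ z : ℂ, z ≠ 0 → g z = (Complex.exp (l * z) - 1) / z := by
    intro z hz
    rw [hgdef, dslope_of_ne _ hz, slope_def_field]
    simp
  have hint : ∀ d : ℝ, d ≠ 0 → ∀ T, ∫ t in (-T)..T, g (d + t * Complex.I) =
      perronJ d l T - perronJ d 0 T := by
    intro d hd T
    unfold perronJ
    rw [← intervalIntegral.integral_sub ((perron_cont d hd l).intervalIntegrable _ _)
      ((perron_cont d hd 0).intervalIntegrable _ _)]
    congr 1
    ext t
    rw [hgv _ (perron_ne d hd t), sub_div]
    simp
  have lim : Tendsto (fun T : ℝ => 4 * c * (Real.exp (l * c) + 1) * T⁻¹) atTop (𝓝 0) := by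
    simpa using tendsto_inv_atTop_zero.const_mul (4 * c * (Real.exp (l * c) + 1))
  refine squeeze_zero_norm' ?_ lim
  filter_upwards [eventually_gt_atTop 0] with T hT
  rw [← hint c hc.ne', ← hint (-c) (neg_ne_zero.2 hc.ne')]
  refine (perron_rect g (-c) c T ((Real.exp (l * c) + 1) / T) (by linarith) hT.le
    (fun z _ => hg z) ?_).trans (le_of_eq ?_)
  · intro x y hx hxc hy
    have hy' := perron_im_le x y
    rw [hy] at hy'
    have hne : (x : ℂ) + y * Complex.I ≠ 0 := norm_pos_iff.1 (by linarith)
    rw [hgv _ hne, norm_div]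
    have h1 : ‖Complex.exp ((l : ℂ) * ((x : ℂ) + y * Complex.I)) - 1‖ ≤ Real.exp (l * c) + 1 := by
      refine (norm_sub_le _ _).trans ?_
      rw [perron_exp_norm, norm_one]
      gcongr
    gcongr
  · field_simp
    ring

theorem perron_formula (c : ℝ) (hc : 0 < c) (l : ℝ) :
    Tendsto (fun T : ℝ =>
        (1 / (2 * Real.pi * Complex.I)) *
          ∫ t in (-T)..T,
            (Complex.exp ((l : ℂ) * ((c : ℂ) + t * Complex.I)) /
              ((c : ℂ) + t * Complex.I)) * Complex.I)
      atTop (𝓝 (if 0 < l then (1 : ℂ) else if l < 0 then 0 else 1 / 2)) := by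
  have hpi : (Real.pi : ℂ) ≠ 0 := by exact_mod_cast Real.pi_ne_zero
  have hJ : (fun T : ℝ => (1 / (2 * Real.pi * Complex.I)) *
          ∫ t in (-T)..T,
            (Complex.exp ((l : ℂ) * ((c : ℂ) + t * Complex.I)) /
              ((c : ℂ) + t * Complex.I)) * Complex.I) =
      fun T => (1 / (2 * Real.pi)) * perronJ c l T := by
    ext T
    rw [intervalIntegral.integral_mul_const, perronJ]
    field_simp
  rw [hJ]
  rcases lt_trichotomy l 0 with h | h | h
  · rw [if_neg h.not_gt, if_pos h]
    simpa using (perron_neg c l hc h).const_mul (1 / (2 * Real.pi : ℂ))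
  · subst h
    simp only [lt_irrefl, if_false]
    have := (perron_zero c hc).const_mul (1 / (2 * Real.pi : ℂ))
    rwa [show (1 / (2 * Real.pi : ℂ)) * Real.pi = 1 / 2 by field_simp] at this
  · rw [if_pos h]
    have h1 := perron_diff c l hc h
    have h2 := perron_neg c (-l) hc (by linarith)
    have h3 := perron_zero c hc
    simp only [perron_refl, neg_zero] at h1
    have h4 := (((h1.sub h2).add h3).add h3).const_mul (1 / (2 * Real.pi : ℂ))
    convert h4 using 2
    · ring
    · field_simp
      ring
end
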